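/- Let N ≥ 2 be an even integer. Then N is monomially irreducible if and only if N ∈ {2, 4, 6, 8, 12, 24}. -/

import Mathlib

namespace Monomial

/-- The elementary matrix `[[a, -1], [1, 0]]` over `ZMod N`. -/
def mat {N : ℕ} (a : ZMod N) : Matrix (Fin 2) (Fin 2) (ZMod N) := !![a, -1; 1, 0]

/-- `M [a₁, …, aₙ] = mat aₙ * ⋯ * mat a₁`. -/
def M {N : ℕ} (l : List (ZMod N)) : Matrix (Fin 2) (Fin 2) (ZMod N) :=
  (l.reverse.map mat).prod

/-- A tuple is a solution of (E_N) if the associated matrix is `±Id`. -/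
def IsSolution {N : ℕ} (l : List (ZMod N)) : Prop := M l = 1 ∨ M l = -1

/-- The sum `(a₁,…,aₙ) ⊕ (b₁,…,bₘ) = (a₁+bₘ, a₂,…,aₙ₋₁, aₙ+b₁, b₂,…,bₘ₋₁)`. -/
def osum {N : ℕ} (u v : List (ZMod N)) : List (ZMod N) :=
  (u.headI + v.getLastD 0) ::
    ((u.drop 1).dropLast ++ (u.getLastD 0 + v.headI) :: (v.drop 1).dropLast)

/-- Equivalence: `v` is a cyclic permutation of `u` or of the reversal of `u`. -/
def CyclicEquiv {N : ℕ} (u v : List (ZMod N)) : Prop :=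
  (∃ i, v = u.rotate i) ∨ (∃ i, v = u.reverse.rotate i)

/-- A tuple is reducible if, up to equivalence, it is a sum of an `m`-tuple (`m ≥ 3`)
with a solution of size `l ≥ 3`. -/
def Reducible {N : ℕ} (c : List (ZMod N)) : Prop :=
  ∃ a b : List (ZMod N), 3 ≤ a.length ∧ 3 ≤ b.length ∧ IsSolution b ∧
    CyclicEquiv c (osum a b)

/-- An irreducible solution: a solution which is not reducible (and `(0,0)` is
not considered irreducible). -/
def IrreducibleSol {N : ℕ} (c : List (ZMod N)) : Prop :=
  IsSolution c ∧ ¬ Reducible c ∧ c ≠ [0, 0]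

/-- The size of the `k`-monomial minimal solution of (E_N): the least `n > 0` such
that the constant `n`-tuple `(k, …, k)` is a solution. -/
noncomputable def monomialMinimalSize (N : ℕ) (k : ZMod N) : ℕ :=
  sInf {n | 0 < n ∧ IsSolution (List.replicate n k)}

/-- `N` is monomially irreducible if, for every `k ≠ 0`, the `k`-monomial minimal
solution of (E_N) is irreducible. -/
def MonomiallyIrreducible (N : ℕ) : Prop :=
  ∀ k : ZMod N, k ≠ 0 → IrreducibleSol (List.replicate (monomialMinimalSize N k) k)

/-- The continuant `Kₙ(x, …, x)` at a constant tuple: `K₀ = 1`, `K₁ = x`,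
`Kₙ₊₂ = x * Kₙ₊₁ - Kₙ`. -/
def K {N : ℕ} (x : ZMod N) : ℕ → ZMod N
  | 0 => 1
  | 1 => x
  | n + 2 => x * K x (n + 1) - K x n

/-- Pairs of consecutive continuants. -/
def SP {R : Type*} [CommRing R] (k : R) : ℕ → R × R
  | 0 => (0, 1)
  | n + 1 => ((SP k n).2, k * (SP k n).2 - (SP k n).1)

/-- The shifted continuant: `S 0 = 0`, `S 1 = 1`, `S (n+2) = k * S (n+1) - S n`. -/
def S {R : Type*} [CommRing R] (k : R) (n : ℕ) : R := (SP k n).1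

section
variable {R : Type*} [CommRing R] (k : R)

theorem S_zero : S k 0 = 0 := rfl
theorem S_one : S k 1 = 1 := rfl
theorem S_rec (n : ℕ) : S k (n + 2) = k * S k (n + 1) - S k n := rfl

theorem S_det (n : ℕ) : S k (n + 1) ^ 2 - S k (n + 2) * S k n = 1 := by
  induction n with
  | zero => simp [S_zero, S_one]
  | succ n ih =>
    rw [← ih, S_rec k (n + 1), S_rec k n]; ring

theorem S_map {R' : Type*} [CommRing R'] (f : R →+* R') (n : ℕ) :
    S (f k) n = f (S k n) ∧ S (f k) (n + 1) = f (S k (n + 1)) := by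
  induction n with
  | zero => simp [S_zero, S_one]
  | succ n ih => exact ⟨ih.2, by rw [S_rec, S_rec, map_sub, map_mul, ih.1, ih.2]⟩

theorem S_neg_one (n : ℕ) : S (-1 : R) (3 * n) = 0 ∧ S (-1 : R) (3 * n + 1) = 1 ∧
    S (-1 : R) (3 * n + 2) = -1 := by
  induction n with
  | zero => simp [S_zero, S_one, S_rec]
  | succ n ih =>
    obtain ⟨h0, h1, h2⟩ := ih
    have e3 : S (-1 : R) (3 * (n + 1)) = 0 := by
      change S (-1 : R) (3 * n + 1 + 2) = 0
      rw [S_rec, h1, h2]; ring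
    have e4 : S (-1 : R) (3 * (n + 1) + 1) = 1 := by
      change S (-1 : R) (3 * n + 2 + 2) = 1
      have e3' : S (-1 : R) (3 * n + 2 + 1) = 0 := e3
      rw [S_rec, h2, e3']; ring
    exact ⟨e3, e4, by rw [S_rec, e3, e4]; ring⟩

theorem S_neg_two (n : ℕ) : S (-2 : R) n = -(-1) ^ n * n ∧
    S (-2 : R) (n + 1) = (-1) ^ n * (n + 1) := by
  induction n with
  | zero => simp [S_zero, S_one]
  | succ n ih =>
    refine ⟨by rw [ih.2]; push_cast; ring, ?_⟩
    rw [S_rec, ih.1, ih.2]; push_cast; ring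

theorem S_sq_zero (hk : k ^ 2 = 0) (n : ℕ) : S k (2 * n) = -(-1) ^ n * n * k ∧
    S k (2 * n + 1) = (-1) ^ n := by
  induction n with
  | zero => simp [S_zero, S_one]
  | succ n ih =>
    have e2 : S k (2 * (n + 1)) = -(-1) ^ (n + 1) * ((n + 1 : ℕ) : R) * k := by
      change S k (2 * n + 2) = _
      rw [S_rec, ih.1, ih.2]; push_cast; ring
    refine ⟨e2, ?_⟩
    change S k (2 * n + 1 + 2) = _
    have e2' : S k (2 * n + 1 + 1) = -(-1) ^ (n + 1) * ((n + 1 : ℕ) : R) * k := e2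
    rw [S_rec, e2', ih.2]
    linear_combination (-(-1) ^ (n + 1) * ((n + 1 : ℕ) : R)) * hk
end

section
variable {N : ℕ}

theorem mat_pow (k : ZMod N) (n : ℕ) :
    mat k ^ (n + 1) = !![S k (n + 2), -S k (n + 1); S k (n + 1), -S k n] := by
  induction n with
  | zero => simp [mat, S_zero, S_one, S_rec]
  | succ n ih =>
    rw [pow_succ', ih, mat, Matrix.mul_fin_two, S_rec k (n + 1), S_rec k n]
    ext i j; fin_cases i <;> fin_cases j <;> simp <;> ring

theorem M_replicate (k : ZMod N) (n : ℕ) : M (List.replicate n k) = mat k ^ n := by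
  simp [M]

theorem M_sandwich (k x y : ZMod N) (j : ℕ) :
    M (x :: (List.replicate j k ++ [y])) = mat y * (mat k ^ j * mat x) := by
  simp [M, mul_assoc]

theorem sol_S {k : ZMod N} {n : ℕ} (hn : 0 < n) (h : IsSolution (List.replicate n k)) :
    S k n = 0 := by
  obtain ⟨m, rfl⟩ : ∃ m, n = m + 1 := ⟨n - 1, by omega⟩
  unfold IsSolution at h
  rw [M_replicate, mat_pow] at h
  rcases h with h | h
  · simpa using congrFun (congrFun h 1) 0
  · simpa using congrFun (congrFun h 1) 0

theorem S_sol {k : ZMod N} {n : ℕ} (hn : 0 < n) (h0 : S k n = 0)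
    (h1 : S k (n + 1) = 1 ∨ S k (n + 1) = -1) : IsSolution (List.replicate n k) := by
  obtain ⟨m, rfl⟩ : ∃ m, n = m + 1 := ⟨n - 1, by omega⟩
  unfold IsSolution
  rw [M_replicate, mat_pow]
  have hr := S_rec k m
  rw [h0, mul_zero, zero_sub] at hr
  rw [show m + 1 + 1 = m + 2 from rfl] at h1
  rw [← hr, h0]
  rcases h1 with h1 | h1
  · left; rw [h1]; simp [Matrix.one_fin_two]
  · right; rw [h1]; ext i j; fin_cases i <;> fin_cases j <;> simp

theorem exists_sol [NeZero N] (k : ZMod N) :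
    ∃ n, 0 < n ∧ IsSolution (List.replicate n k) := by
  have hu : IsUnit (mat k) := by
    rw [Matrix.isUnit_iff_isUnit_det]; simp [mat, Matrix.det_fin_two]
  obtain ⟨u, hu⟩ := hu
  obtain ⟨n, hn, h⟩ := isOfFinOrder_iff_pow_eq_one.1 (isOfFinOrder_of_finite u)
  refine ⟨n, hn, Or.inl ?_⟩
  rw [M_replicate, ← hu, ← Units.val_pow_eq_pow_val, h, Units.val_one]

theorem min_spec [NeZero N] (k : ZMod N) : 0 < monomialMinimalSize N k ∧
    IsSolution (List.replicate (monomialMinimalSize N k) k) :=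
  Nat.sInf_mem (s := {n | 0 < n ∧ IsSolution (List.replicate n k)}) (exists_sol k)

theorem reducible_of_S (k : ZMod N) (j n : ℕ) (hj : 1 ≤ j) (hn : j + 3 ≤ n)
    (h : S k (j + 1) = 1 ∨ S k (j + 1) = -1) : Reducible (List.replicate n k) := by
  obtain ⟨i, rfl⟩ : ∃ i, j = i + 1 := ⟨j - 1, by omega⟩
  obtain ⟨r, rfl⟩ : ∃ r, n = r + 1 + (i + 3) := ⟨n - (i + 4), by omega⟩
  set x := S k (i + 1 + 1) * S k (i + 1) with hx
  refine ⟨(k - x) :: (List.replicate (r + 1) k ++ [k - x]),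
    x :: (List.replicate (i + 1) k ++ [x]), by simp, by simp, ?_, Or.inl ⟨0, ?_⟩⟩
  · unfold IsSolution
    rw [M_sandwich, mat_pow]
    have hd := S_det k i
    have hr := S_rec k i
    simp only [show i + 1 + 1 = i + 2 from rfl] at h hx
    simp only [mat, Matrix.mul_fin_two]
    rcases h with h | h
    · right
      rw [h, one_mul] at hx
      rw [h] at hd ⊢
      rw [hx]
      ext a b; fin_cases a <;> fin_cases b <;> simp <;> linear_combination -hd
    · left
      rw [h] at hx
      rw [h] at hd ⊢
      rw [hx]
      ext a b; fin_cases a <;> fin_cases b <;> simp <;> linear_combination hd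
  · unfold osum
    have e1 : ((k - x) :: (List.replicate (r + 1) k ++ [k - x])).getLastD 0 = k - x := by
      rw [← List.cons_append]; simp only [List.getLastD_eq_getLast?, List.getLast?_concat, Option.getD_some]
    have e2 : (x :: (List.replicate (i + 1) k ++ [x])).getLastD 0 = x := by
      rw [← List.cons_append]; simp only [List.getLastD_eq_getLast?, List.getLast?_concat, Option.getD_some]
    rw [e1, e2]
    simp only [List.headI_cons, List.drop_one, List.tail_cons, List.dropLast_concat,
      sub_add_cancel, List.rotate_zero]
    rw [← List.replicate_succ, ← List.replicate_add, ← List.replicate_succ]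
    congr 1

theorem S_of_reducible (k : ZMod N) (n : ℕ) (h : Reducible (List.replicate n k)) :
    ∃ j, 1 ≤ j ∧ j + 3 ≤ n ∧ (S k (j + 1) = 1 ∨ S k (j + 1) = -1) := by
  obtain ⟨a, b, ha, hb, hs, hc⟩ := h
  have hc' : osum a b = List.replicate n k := by
    rcases hc with ⟨i, hi⟩ | ⟨i, hi⟩ <;> simpa using hi
  obtain ⟨x, t, rfl⟩ : ∃ x t, b = x :: t := by
    cases b with
    | nil => simp at hb
    | cons x t => exact ⟨x, t, rfl⟩
  obtain ⟨m, y, rfl⟩ : ∃ m y, t = m ++ [y] := by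
    rcases List.eq_nil_or_concat t with rfl | ⟨m, y, h⟩
    · simp at hb
    · exact ⟨m, y, by simpa using h⟩
  have hlen := congrArg List.length hc'
  simp [osum] at hlen
  simp at hb
  have hm : m = List.replicate m.length k := by
    rw [List.eq_replicate_iff]
    refine ⟨rfl, fun z hz => ?_⟩
    have : z ∈ osum a (x :: (m ++ [y])) := by
      simp [osum, hz]
    rw [hc'] at this
    exact List.eq_of_mem_replicate this
  refine ⟨m.length, by omega, by omega, ?_⟩
  rw [hm] at hs
  obtain ⟨i, hi⟩ : ∃ i, m.length = i + 1 := ⟨m.length - 1, by omega⟩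
  rw [hi] at hs ⊢
  unfold IsSolution at hs
  rw [M_sandwich, mat_pow] at hs
  simp only [mat, Matrix.mul_fin_two] at hs
  rcases hs with h | h
  · right
    have := congrFun (congrFun h 1) 1
    simp at this
    linear_combination -this
  · left
    have := congrFun (congrFun h 1) 1
    simp at this
    linear_combination this

theorem irr_of_check (hN : 2 ≤ N)
    (h : ∀ k : ZMod N, k ≠ 0 → ∃ n < 25, 0 < n ∧ S k n = 0 ∧
      (S k (n + 1) = 1 ∨ S k (n + 1) = -1) ∧
      ∀ j < n - 3, ¬ (S k (j + 2) = 1 ∨ S k (j + 2) = -1)) : MonomiallyIrreducible N := by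
  intro k hk
  haveI : NeZero N := ⟨by omega⟩
  obtain ⟨n, -, hn, h0, h1, h2⟩ := h k hk
  have hle : monomialMinimalSize N k ≤ n := Nat.sInf_le ⟨hn, S_sol hn h0 h1⟩
  refine ⟨(min_spec k).2, fun hr => ?_, fun he => ?_⟩
  · obtain ⟨j, hj, hj2, hS⟩ := S_of_reducible k _ hr
    obtain ⟨i, rfl⟩ : ∃ i, j = i + 1 := ⟨j - 1, by omega⟩
    exact h2 i (by omega) hS
  · have hl := congrArg List.length he
    simp at hl
    rw [hl] at he
    simp [List.replicate] at he
    exact hk he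

theorem not_irr [NeZero N] (k : ZMod N) (hk : k ≠ 0) (j : ℕ) (hj : 1 ≤ j)
    (h : S k (j + 1) = 1 ∨ S k (j + 1) = -1) (hn : ∀ n, 0 < n → S k n = 0 → j + 3 ≤ n) :
    ¬ MonomiallyIrreducible N := by
  intro hM
  have := min_spec k
  exact (hM k hk).2.1 (reducible_of_S k j _ hj (hn _ this.1 (sol_S this.1 this.2)) h)

theorem not_irr_sq [NeZero N] (k : ZMod N) (hk2 : k ^ 2 = 0) (h2 : 2 * k ≠ 0) :
    ¬ MonomiallyIrreducible N := by
  have hk : k ≠ 0 := by rintro rfl; simp at h2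
  have hN1 : (1 : ZMod N) ≠ 0 := by
    intro h; exact hk (by rw [← mul_one k, h, mul_zero])
  refine not_irr k hk 2 (by norm_num) (Or.inr ?_) ?_
  · simpa using (S_sq_zero k hk2 1).2
  · intro n hn hS
    by_contra hlt
    interval_cases n
    · exact hN1 hS
    · exact hk (by simpa [S_rec, S_zero, S_one] using hS)
    · have := (S_sq_zero k hk2 1).2
      rw [show 2 * 1 + 1 = 3 from rfl, hS] at this
      exact hN1 (by linear_combination this)
    · have := (S_sq_zero k hk2 2).1
      rw [show 2 * 2 = 4 from rfl, hS] at this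
      push_cast at this
      exact h2 (by linear_combination this)

theorem not_irr_coprime (Q P : ℕ) (hQ : 2 ≤ Q) (hP : 5 ≤ P) (hc : Q.Coprime P)
    (h2 : P % 2 = 1) (h3 : P % 3 ≠ 0) : ¬ MonomiallyIrreducible (Q * P) := by
  haveI : NeZero (Q * P) := ⟨by positivity⟩
  haveI : Fact (1 < Q) := ⟨by omega⟩
  let e := ZMod.chineseRemainder hc
  set k : ZMod (Q * P) := e.symm (-1, -2) with hkdef
  have hek : e k = (-1, -2) := by simp [hkdef]
  let f1 : ZMod (Q * P) →+* ZMod Q := (RingHom.fst _ _).comp e.toRingHom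
  let f2 : ZMod (Q * P) →+* ZMod P := (RingHom.snd _ _).comp e.toRingHom
  have hf1 : f1 k = -1 := congrArg Prod.fst hek
  have hf2 : f2 k = -2 := congrArg Prod.snd hek
  have inj : ∀ a b, f1 a = f1 b → f2 a = f2 b → a = b := fun a b h h' =>
    e.injective (Prod.ext h h')
  have hS1 : ∀ n, f1 (S k n) = S (-1) n := fun n => by rw [← (S_map k f1 n).1, hf1]
  have hS2 : ∀ n, f2 (S k n) = S (-2) n := fun n => by rw [← (S_map k f2 n).1, hf2]
  have hk : k ≠ 0 := by
    intro h; rw [h, map_zero] at hf1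
    exact (neg_ne_zero.2 (one_ne_zero (α := ZMod Q))) hf1.symm
  have hsize : ∀ n, 0 < n → S k n = 0 → 3 * P ≤ n := by
    intro n hn h
    have a1 := hS1 n
    have a2 := hS2 n
    rw [h, map_zero] at a1 a2
    have d3 : 3 ∣ n := by
      obtain ⟨b0, b1, b2⟩ := S_neg_one (R := ZMod Q) (n / 3)
      rcases (by omega : n = 3 * (n / 3) ∨ n = 3 * (n / 3) + 1 ∨ n = 3 * (n / 3) + 2)
        with h | h | h
      · exact ⟨_, h⟩
      · rw [← h] at b1; rw [b1] at a1; exact absurd a1.symm one_ne_zero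
      · rw [← h] at b2; rw [b2] at a1
        exact absurd a1.symm (neg_ne_zero.2 one_ne_zero)
    have dP : P ∣ n := by
      rw [(S_neg_two n).1] at a2
      rw [← ZMod.natCast_eq_zero_iff]
      rcases neg_one_pow_eq_or (ZMod P) n with h | h <;> rw [h] at a2 <;> simpa using a2.symm
    have hc3 : Nat.Coprime 3 P := by
      rw [Nat.Prime.coprime_iff_not_dvd Nat.prime_three]; omega
    exact Nat.le_of_dvd hn (hc3.mul_dvd_of_dvd_of_dvd d3 dP)
  have hP0 : (P : ZMod P) = 0 := ZMod.natCast_self P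
  rcases (by omega : P % 3 = 1 ∨ P % 3 = 2) with h | h
  · refine not_irr k hk P (by omega) (Or.inr (inj _ _ ?_ ?_)) ?_
    · rw [hS1, map_neg, map_one]
      have := (S_neg_one (R := ZMod Q) (P / 3)).2.2
      rwa [show 3 * (P / 3) + 2 = P + 1 by omega] at this
    · rw [hS2, map_neg, map_one, (S_neg_two P).2, Odd.neg_one_pow (Nat.odd_iff.2 h2), hP0]
      ring
    · intro n hn hs; have := hsize n hn hs; omega
  · obtain ⟨q, rfl⟩ : ∃ q, P = q + 2 := ⟨P - 2, by omega⟩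
    refine not_irr k hk q (by omega) (Or.inl (inj _ _ ?_ ?_)) ?_
    · rw [hS1, map_one]
      have := (S_neg_one (R := ZMod Q) (q / 3)).2.1
      rwa [show 3 * (q / 3) + 1 = q + 1 by omega] at this
    · rw [hS2, map_one, (S_neg_two q).2, Odd.neg_one_pow (Nat.odd_iff.2 (by omega))]
      push_cast at hP0
      linear_combination -hP0
    · intro n hn hs; have := hsize n hn hs; omega

theorem not_irr_dvd (d : ℕ) (hd : 3 ≤ d) (hN : 0 < N) (h : d * d ∣ N) :
    ¬ MonomiallyIrreducible N := by
  haveI : NeZero N := ⟨by omega⟩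
  obtain ⟨c, rfl⟩ := h
  have hc : 0 < c := Nat.pos_of_mul_pos_left hN
  refine not_irr_sq ((d * c : ℕ) : ZMod (d * d * c)) ?_ ?_
  · rw [← Nat.cast_pow, ZMod.natCast_eq_zero_iff]
    exact ⟨c, by ring⟩
  · intro h
    have h' : ((2 * (d * c) : ℕ) : ZMod (d * d * c)) = 0 := by push_cast at h ⊢; exact h
    rw [ZMod.natCast_eq_zero_iff] at h'
    have := Nat.le_of_dvd (by positivity) h'
    nlinarith [Nat.mul_le_mul_right (d * c) hd, Nat.mul_pos (by omega : 0 < d) hc]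
end

theorem mem_of_irr (N : ℕ) (hN : 2 ≤ N) (he : Even N) (h : MonomiallyIrreducible N) :
    N ∈ ({2, 4, 6, 8, 12, 24} : Set ℕ) := by
  have hp : ∀ p, p.Prime → p ∣ N → p ≤ 3 := by
    intro p hp hd
    by_contra hlt
    have hp5 : 5 ≤ p := by
      by_contra h5
      have : p = 4 := by omega
      subst this
      exact absurd hp (by norm_num)
    have hN0 : N ≠ 0 := by omega
    set e := N.factorization p with hedef
    obtain ⟨Q, hQ⟩ : p ^ e ∣ N := Nat.ordProj_dvd N p
    have he1 : e ≠ 0 := (hp.factorization_pos_of_dvd hN0 hd).ne'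
    have hcop : Nat.Coprime p (N / p ^ e) := Nat.coprime_ordCompl hp hN0
    have hppos : 0 < p ^ e := pow_pos hp.pos e
    rw [show N / p ^ e = Q by rw [hQ]; exact Nat.mul_div_cancel_left _ hppos] at hcop
    have h2p : ¬ 2 ∣ p ^ e := fun hh => by
      have := (Nat.prime_dvd_prime_iff_eq Nat.prime_two hp).1 (Nat.prime_two.dvd_of_dvd_pow hh)
      omega
    have h3p : ¬ 3 ∣ p ^ e := fun hh => by
      have := (Nat.prime_dvd_prime_iff_eq Nat.prime_three hp).1
        (Nat.prime_three.dvd_of_dvd_pow hh)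
      omega
    have h2Q : 2 ∣ Q := by
      have : 2 ∣ p ^ e * Q := hQ ▸ he.two_dvd
      exact (Nat.prime_two.dvd_mul.1 this).resolve_left h2p
    have hQ0 : Q ≠ 0 := by rintro rfl; omega
    have hpe : 5 ≤ p ^ e := hp5.trans (Nat.le_self_pow he1 p)
    refine not_irr_coprime Q (p ^ e) (by omega) hpe (hcop.symm.pow_right e) (by omega)
      (by omega) ?_
    rw [mul_comm, ← hQ]; exact h
  have h16 : ¬ 4 * 4 ∣ N := fun hd => not_irr_dvd 4 (by norm_num) (by omega) hd h
  have h9 : ¬ 3 * 3 ∣ N := fun hd => not_irr_dvd 3 (by norm_num) (by omega) hd h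
  have hdvd : N ∣ 24 := by
    have hN0 : N ≠ 0 := by omega
    rw [Nat.dvd_iff_prime_pow_dvd_dvd]
    intro p k hpp hk
    rcases Nat.eq_zero_or_pos k with rfl | hk0
    · simp
    have hple := hp p hpp ((dvd_pow_self p hk0.ne').trans hk)
    have hp2 := hpp.two_le
    interval_cases p
    · have : k ≤ 3 := by
        by_contra hc
        exact h16 ((pow_dvd_pow 2 (by omega : 4 ≤ k)).trans hk)
      exact (pow_dvd_pow 2 this).trans (by norm_num)
    · have : k ≤ 1 := by
        by_contra hc
        exact h9 ((pow_dvd_pow 3 (by omega : 2 ≤ k)).trans hk)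
      exact (pow_dvd_pow 3 this).trans (by norm_num)
  have hle := Nat.le_of_dvd (by norm_num) hdvd
  have h2 := he.two_dvd
  clear hp h16 h9 h he
  simp only [Set.mem_insert_iff, Set.mem_singleton_iff]
  interval_cases N <;> omega

theorem stmt1 (N : ℕ) (hN : 2 ≤ N) (he : Even N) :
    MonomiallyIrreducible N ↔ N ∈ ({2, 4, 6, 8, 12, 24} : Set ℕ) := by
  refine ⟨mem_of_irr N hN he, ?_⟩
  rintro (rfl | rfl | rfl | rfl | rfl | rfl)
  · exact irr_of_check hN (by decide +kernel)
  · exact irr_of_check hN (by decide +kernel)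
  · exact irr_of_check hN (by decide +kernel)
  · exact irr_of_check hN (by decide +kernel)
  · exact irr_of_check hN (by decide +kernel)
  · exact irr_of_check hN (by decide +kernel)

end Monomial
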